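/- Let α, β, γ, a, b, c be real numbers such that R_1(α) R_2(β) R_1(γ) = R_2(a) R_1(b) R_2(c) as 3 × 3 real matrices. Then sin α · sin β = sin b · sin c and sin β · sin γ = sin a · sin b. -/

import Mathlib

open Matrix
open scoped Real

noncomputable section

/-- The Givens rotation `R_1(θ)` in `SO(3)` (2×2 block in rows/columns 1, 2). -/
def R1 (t : ℝ) : Matrix (Fin 3) (Fin 3) ℝ :=
  !![Real.cos t, Real.sin t, 0; -Real.sin t, Real.cos t, 0; 0, 0, 1]

/-- The Givens rotation `R_2(θ)` in `SO(3)` (2×2 block in rows/columns 2, 3). -/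
def R2 (t : ℝ) : Matrix (Fin 3) (Fin 3) ℝ :=
  !![1, 0, 0; 0, Real.cos t, Real.sin t; 0, -Real.sin t, Real.cos t]

/-!
Since `R1` fixes the third axis and `R2` the first, neither the factor `R1 γ` on the right nor the
factor `R2 a` on the left affects the corner entry `(0, 2)`. That entry of the identity therefore
compares `R1 α * R2 β` with `R1 b * R2 c`, which is the first relation. Transposing the
identity replaces `(α, β, γ)` by `(-γ, -β, -α)` and `(a, b, c)` by `(-c, -b, -a)`, and the first
relation for these angles is the second relation for the original ones.
-/

theorem transpose_R1 (t : ℝ) : (R1 t)ᵀ = R1 (-t) := by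
  ext i j
  fin_cases i <;> fin_cases j <;> simp [R1]

theorem transpose_R2 (t : ℝ) : (R2 t)ᵀ = R2 (-t) := by
  ext i j
  fin_cases i <;> fin_cases j <;> simp [R2]

theorem mul_R1_apply_two {m : Type*} (M : Matrix m (Fin 3) ℝ) (t : ℝ) (i : m) :
    (M * R1 t) i 2 = M i 2 := by
  simp [R1, mul_apply, Fin.sum_univ_three]

theorem R2_mul_apply_zero {n : Type*} (t : ℝ) (M : Matrix (Fin 3) n ℝ) (j : n) :
    (R2 t * M) 0 j = M 0 j := by
  simp [R2, mul_apply, Fin.sum_univ_three]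

theorem R1_mul_R2_apply_zero_two (s t : ℝ) :
    (R1 s * R2 t) 0 2 = Real.sin s * Real.sin t := by
  simp [R1, R2, mul_apply, Fin.sum_univ_three]

theorem sin_mul_sin_eq_of_givens_turnover {α β γ a b c : ℝ}
    (h : R1 α * R2 β * R1 γ = R2 a * R1 b * R2 c) :
    Real.sin α * Real.sin β = Real.sin b * Real.sin c :=
  calc
    Real.sin α * Real.sin β = (R1 α * R2 β) 0 2 := (R1_mul_R2_apply_zero_two α β).symm
    _ = (R1 α * R2 β * R1 γ) 0 2 := (mul_R1_apply_two _ γ 0).symm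
    _ = (R2 a * (R1 b * R2 c)) 0 2 := by rw [h, Matrix.mul_assoc]
    _ = (R1 b * R2 c) 0 2 := R2_mul_apply_zero a _ 2
    _ = Real.sin b * Real.sin c := R1_mul_R2_apply_zero_two b c

theorem givens_turnover_transpose {α β γ a b c : ℝ}
    (h : R1 α * R2 β * R1 γ = R2 a * R1 b * R2 c) :
    R1 (-γ) * R2 (-β) * R1 (-α) = R2 (-c) * R1 (-b) * R2 (-a) := by
  simpa only [transpose_mul, transpose_R1, transpose_R2, Matrix.mul_assoc]
    using congrArg transpose h

/-- If `R_1(α) R_2(β) R_1(γ) = R_2(a) R_1(b) R_2(c)` then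
`sin α sin β = sin b sin c` and `sin β sin γ = sin a sin b`. -/
theorem givens_turnover_sin_relations (α β γ a b c : ℝ)
    (h : R1 α * R2 β * R1 γ = R2 a * R1 b * R2 c) :
    Real.sin α * Real.sin β = Real.sin b * Real.sin c ∧
    Real.sin β * Real.sin γ = Real.sin a * Real.sin b := by
  refine ⟨sin_mul_sin_eq_of_givens_turnover h, ?_⟩
  simpa only [Real.sin_neg, neg_mul_neg, mul_comm] using
    sin_mul_sin_eq_of_givens_turnover (givens_turnover_transpose h)
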